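/- For every integer k ≥ 0, the class B_k-VPG is a proper subclass of the class B_{k+1}-VPG; that is, every graph with a B_k-VPG representation has a B_{k+1}-VPG representation, and there exists a graph that has a B_{k+1}-VPG representation but no B_k-VPG representation. -/

import Mathlib

open Set Metric

/-- A point of the plane. -/
abbrev Pt : Type := ℝ × ℝ

/-- The trace (image) of a curve parametrized over `[0,1]`. -/
def Im (γ : ℝ → Pt) : Set Pt := γ '' Icc 0 1

/-- `γ` is affine on the interval `[s,t]`. -/
def AffOn (γ : ℝ → Pt) (s t : ℝ) : Prop :=
  ∃ a d : Pt, ∀ x ∈ Icc s t, γ x = (a.1 + x * d.1, a.2 + x * d.2)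

/-- `γ` is affine on `[s,t]` with a horizontal or vertical direction. -/
def AxisAffOn (γ : ℝ → Pt) (s t : ℝ) : Prop :=
  ∃ a d : Pt, (d.1 = 0 ∨ d.2 = 0) ∧ ∀ x ∈ Icc s t, γ x = (a.1 + x * d.1, a.2 + x * d.2)

/-- `γ` restricted to `[0,1]` is a simple piecewise linear curve consisting of at most
`n` straight segments. -/
def IsPLCurveN (n : ℕ) (γ : ℝ → Pt) : Prop :=
  InjOn γ (Icc 0 1) ∧
    ∃ t : Fin (n + 1) → ℝ, t 0 = 0 ∧ t (Fin.last n) = 1 ∧ Monotone t ∧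
      ∀ i : Fin n, AffOn γ (t i.castSucc) (t i.succ)

/-- `γ` is a simple piecewise linear curve (finitely many segments). -/
def IsPLCurve (γ : ℝ → Pt) : Prop := ∃ n, IsPLCurveN n γ

/-- `γ` restricted to `[0,1]` is a simple rectilinear (axis-parallel) curve consisting of
at most `n` horizontal or vertical straight segments. -/
def IsRectCurveN (n : ℕ) (γ : ℝ → Pt) : Prop :=
  InjOn γ (Icc 0 1) ∧
    ∃ t : Fin (n + 1) → ℝ, t 0 = 0 ∧ t (Fin.last n) = 1 ∧ Monotone t ∧
      ∀ i : Fin n, AxisAffOn γ (t i.castSucc) (t i.succ)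

/-- `γ` is a simple rectilinear (axis-parallel) piecewise linear curve. -/
def IsRectCurve (γ : ℝ → Pt) : Prop := ∃ n, IsRectCurveN n γ

/-- A `k`-bend axis-parallel curve: a simple curve that is a concatenation of at most
`k+1` horizontal or vertical straight segments (hence has at most `k` bends). -/
def IsKBendCurve (k : ℕ) (γ : ℝ → Pt) : Prop := IsRectCurveN (k + 1) γ

/-- `R` is an intersection representation of `G` by curves:
two distinct vertices are adjacent iff their curves meet. -/
def Represents {V : Type*} (G : SimpleGraph V) (R : V → ℝ → Pt) : Prop :=
  ∀ u v : V, u ≠ v → ((Im (R u) ∩ Im (R v)).Nonempty ↔ G.Adj u v)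

/-- The set of intersection points of a representation: points lying on (at least)
two distinct curves. -/
def InPts {V : Type*} (R : V → ℝ → Pt) : Set Pt :=
  {p | ∃ u v : V, u ≠ v ∧ p ∈ Im (R u) ∧ p ∈ Im (R v)}

/-- The set `B` crosses (transversally, from one side to the other) the set `A` at `p`:
in every small ball around `p` there are points of `B` off `A` that cannot be joined by a
connected subset of the ball avoiding `A`. -/
def CrossesAt (A B : Set Pt) (p : Pt) : Prop :=
  ∃ ε₀ > (0:ℝ), ∀ ε : ℝ, 0 < ε → ε ≤ ε₀ →
    ∃ x y : Pt, x ∈ (B ∩ ball p ε) \ A ∧ y ∈ (B ∩ ball p ε) \ A ∧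
      ∀ C : Set Pt, C ⊆ ball p ε \ A → IsConnected C → ¬(x ∈ C ∧ y ∈ C)

/-- A proper representation: finitely many intersection points (in particular no two
curves overlap), every intersection point lies on exactly two curves which cross
(do not touch) there, and no endpoint of a curve lies on another curve. -/
def IsProperRep {V : Type*} (R : V → ℝ → Pt) : Prop :=
  (InPts R).Finite ∧
    (∀ p : Pt, ∀ u v w : V, u ≠ v → u ≠ w → v ≠ w →
      ¬(p ∈ Im (R u) ∧ p ∈ Im (R v) ∧ p ∈ Im (R w))) ∧
    (∀ u v : V, u ≠ v → R u 0 ∉ Im (R v) ∧ R u 1 ∉ Im (R v)) ∧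
    (∀ u v : V, u ≠ v → ∀ p ∈ Im (R u) ∩ Im (R v),
      CrossesAt (Im (R u)) (Im (R v)) p ∧ CrossesAt (Im (R v)) (Im (R u)) p)

/-- Membership in the class `B_k`-VPG. -/
def InBkVPG (k : ℕ) {V : Type*} (G : SimpleGraph V) : Prop :=
  ∃ R : V → ℝ → Pt, (∀ v, IsKBendCurve k (R v)) ∧ Represents G R

/-- Membership in the class SEG of intersection graphs of straight line segments. -/
def InSEG {V : Type*} (G : SimpleGraph V) : Prop :=
  ∃ S : V → Pt × Pt, (∀ v, (S v).1 ≠ (S v).2) ∧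
    ∀ u v : V, u ≠ v →
      ((segment ℝ (S u).1 (S u).2 ∩ segment ℝ (S v).1 (S v).2).Nonempty ↔ G.Adj u v)

/-- Membership in the class 3-DIR: intersection graphs of straight line segments using
at most three distinct directions (slopes). -/
def In3DIR {V : Type*} (G : SimpleGraph V) : Prop :=
  ∃ D : Fin 3 → Pt, ∃ S : V → Pt × Pt,
    (∀ v, (S v).1 ≠ (S v).2) ∧
    (∀ v, ∃ i : Fin 3, ∃ c : ℝ, (S v).2 - (S v).1 = c • D i) ∧
    ∀ u v : V, u ≠ v →
      ((segment ℝ (S u).1 (S u).2 ∩ segment ℝ (S v).1 (S v).2).Nonempty ↔ G.Adj u v)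

/-- `L` is a (straight) line in the plane. -/
def IsLine (L : Set Pt) : Prop :=
  ∃ p d : Pt, d ≠ 0 ∧ L = {x : Pt | ∃ r : ℝ, x = (p.1 + r * d.1, p.2 + r * d.2)}

/-- `z` is a bend point of the set `S` (trace of a curve): `S` is not locally straight
at `z`, i.e. no neighbourhood of `z` in `S` is contained in a line. -/
def IsBendPt (S : Set Pt) (z : Pt) : Prop :=
  z ∈ S ∧ ∀ ε > (0:ℝ), ¬ ∃ L : Set Pt, IsLine L ∧ S ∩ ball z ε ⊆ L

/-!
The proof counts neighbourhoods. An axis-parallel curve with `n` segments is determined, once the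
directions of its segments are chosen, by `n + 2` coordinates: two for its starting point and one
for each segment. Which of `m` fixed curves with boundedly many segments it meets depends only on
the directions and on how each of these coordinates compares with the `O(m)` coordinates of the
fixed curves, so such curves have only `O(m ^ (n + 2))` different neighbourhoods.

One more segment contributes one more free coordinate, and monotone staircases realize all of
them: let a staircase have `k + 2` segments and let its `i`-th coordinate range over the `i`-th of
`k + 4` consecutive blocks of length `L`. A short segment at position `w`, placed across the
`i`-th segments of all the staircases, meets a staircase iff `w` lies between the `i`-th and the
`(i + 2)`-nd coordinate of that staircase. Hence `O(L)` such gates distinguish all `L ^ (k + 4)`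
staircases, whereas curves with `k + 1` segments have only `O(L ^ (k + 3))` different
neighbourhoods among them.
-/

/-! ### Chains of segments -/

theorem axisAffOn_self (γ : ℝ → Pt) (s : ℝ) : AxisAffOn γ s s :=
  ⟨γ s, 0, Or.inl rfl, fun x hx => by
    rw [Icc_self] at hx
    simp [mem_singleton_iff.1 hx]⟩

theorem IsRectCurveN.succ {n : ℕ} {γ : ℝ → Pt} (h : IsRectCurveN n γ) :
    IsRectCurveN (n + 1) γ := by
  obtain ⟨hinj, t, ht0, ht1, hmono, haff⟩ := h
  -- Doubling the last division point appends a degenerate segment.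
  refine ⟨hinj, t ∘ (Fin.last n).predAbove, by simpa using ht0, by simpa using ht1,
    hmono.comp (Fin.predAbove_right_monotone _), fun i => ?_⟩
  induction i using Fin.lastCases with
  | last =>
    simpa only [Function.comp_apply, Fin.predAbove_last_castSucc, Fin.succ_last,
      Fin.predAbove_right_last] using axisAffOn_self γ (t (Fin.last n))
  | cast i =>
    simpa only [Function.comp_apply, Fin.succ_castSucc, Fin.predAbove_last_castSucc] using haff i

theorem IsRectCurveN.mono {m n : ℕ} (hmn : m ≤ n) {γ : ℝ → Pt} (h : IsRectCurveN m γ) :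
    IsRectCurveN n γ :=
  monotone_nat_of_le_succ (f := fun n => IsRectCurveN n γ) (fun _ => IsRectCurveN.succ) hmn h

theorem iUnion_Icc_castSucc_succ {α : Type*} [LinearOrder α] {n : ℕ} {t : Fin (n + 1) → α}
    (hmono : Monotone t) (hlt : t 0 < t (Fin.last n)) :
    ⋃ i : Fin n, Icc (t i.castSucc) (t i.succ) = Icc (t 0) (t (Fin.last n)) := by
  refine (iUnion_subset fun i => ?_).antisymm fun x hx => mem_iUnion.2 ?_
  · exact Icc_subset_Icc (hmono (Fin.zero_le _)) (hmono (Fin.le_last _))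
  · induction n with
    | zero => exact absurd hlt (lt_irrefl _)
    | succ n ih =>
      rcases le_or_gt (t (Fin.last n).castSucc) x with hle | hgt
      · exact ⟨Fin.last n, hle, hx.2⟩
      · obtain ⟨i, hi⟩ := ih (hmono.comp Fin.strictMono_castSucc.monotone)
          (hx.1.trans_lt hgt) ⟨hx.1, hgt.le⟩
        exact ⟨i.castSucc, hi⟩

theorem AxisAffOn.comp_lineMap {γ : ℝ → Pt} {p q s t : ℝ} (hpq : p < q)
    (h : AxisAffOn γ (AffineMap.lineMap p q s) (AffineMap.lineMap p q t)) :
    AxisAffOn (γ ∘ AffineMap.lineMap p q) s t := by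
  obtain ⟨a, d, hd, hγ⟩ := h
  refine ⟨a + p • d, (q - p) • d, hd.imp (by simp [·]) (by simp [·]), fun x hx => ?_⟩
  rw [Function.comp_apply, hγ _ ⟨(lineMap_le_lineMap_iff_of_lt' hpq).2 hx.1,
    (lineMap_le_lineMap_iff_of_lt' hpq).2 hx.2⟩]
  ext <;> simp [AffineMap.lineMap_apply_ring'] <;> ring

theorem exists_isRectCurveN_of_chain {n : ℕ} {γ : ℝ → Pt} {s : Fin (n + 1) → ℝ}
    (hmono : Monotone s) (hlt : s 0 < s (Fin.last n))
    (hinj : InjOn γ (Icc (s 0) (s (Fin.last n))))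
    (haff : ∀ i : Fin n, AxisAffOn γ (s i.castSucc) (s i.succ)) :
    ∃ δ, IsRectCurveN n δ ∧ Im δ = ⋃ i : Fin n, γ '' Icc (s i.castSucc) (s i.succ) := by
  set p := s 0
  set q := s (Fin.last n)
  have hpq : q - p ≠ 0 := (sub_pos.2 hlt).ne'
  have hline : AffineMap.lineMap p q '' Icc (0 : ℝ) 1 = Icc p q := by
    rw [← segment_eq_image_lineMap, segment_eq_Icc hlt.le]
  have hs : ∀ i, AffineMap.lineMap p q ((s i - p) / (q - p)) = s i := fun i => by
    rw [AffineMap.lineMap_apply_ring', div_mul_cancel₀ _ hpq, sub_add_cancel]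
  refine ⟨γ ∘ AffineMap.lineMap p q, ⟨?_, fun i => (s i - p) / (q - p), ?_, ?_, ?_, ?_⟩, ?_⟩
  · exact hinj.comp (AffineMap.lineMap_injective ℝ hlt.ne).injOn (hline ▸ mapsTo_image _ _)
  · exact div_eq_zero_iff.2 (Or.inl (sub_self p))
  · exact div_self hpq
  · exact fun i j hij =>
      div_le_div_of_nonneg_right (sub_le_sub_right (hmono hij) p) (sub_pos.2 hlt).le
  · exact fun i => AxisAffOn.comp_lineMap hlt (by simpa only [hs] using haff i)
  · rw [Im, image_comp, hline, ← iUnion_Icc_castSucc_succ hmono hlt, image_iUnion]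

/-! ### Rectilinear paths and their codes -/

/-- The abscissa (`true`) or ordinate (`false`) of a point. -/
def coord (b : Bool) (p : Pt) : ℝ := bif b then p.1 else p.2

/-- The combinatorial data of a rectilinear curve with `n` segments: its vertices and, for each
segment, a coordinate that it keeps fixed. Degenerate segments and self-intersections are
allowed. -/
structure RectPath (n : ℕ) where
  vertex : Fin (n + 1) → Pt
  fixed : Fin n → Bool
  coord_fixed : ∀ i, coord (fixed i) (vertex i.succ) = coord (fixed i) (vertex i.castSucc)

namespace RectPath

variable {n : ℕ} {α : Type*}

/-- The set of points on a rectilinear path; `uIcc` is the segment between two consecutive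
vertices because these agree in one coordinate. -/
def trace (P : RectPath n) : Set Pt :=
  ⋃ i : Fin n, uIcc (P.vertex i.castSucc) (P.vertex i.succ)

/-- The code of a rectilinear path under a labelling `f` of the reals: the direction of each
segment, and the labels of the `n + 2` coordinates that these directions leave free. -/
def code (f : ℝ → α) (P : RectPath n) : (Fin n → Bool) × (Bool → α) × (Fin n → α) :=
  (P.fixed, fun b => f (coord b (P.vertex 0)), fun i => f (coord (!P.fixed i) (P.vertex i.succ)))

theorem label_eq_of_code_eq {f : ℝ → α} {P Q : RectPath n} (h : P.code f = Q.code f)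
    (i : Fin (n + 1)) (b : Bool) : f (coord b (P.vertex i)) = f (coord b (Q.vertex i)) := by
  simp only [code, Prod.mk.injEq, funext_iff] at h
  obtain ⟨hfixed, hstart, hfree⟩ := h
  induction i using Fin.induction with
  | zero => exact hstart b
  | succ i ih =>
    rcases Bool.eq_or_eq_not b (P.fixed i) with rfl | rfl
    · have hQ := Q.coord_fixed i
      rw [← hfixed i] at hQ
      rw [P.coord_fixed, hQ, ih]
    · simpa only [hfixed i] using hfree i

end RectPath

theorem AxisAffOn.exists_coord_eq {γ : ℝ → Pt} {s t : ℝ} (hst : s ≤ t) (h : AxisAffOn γ s t) :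
    ∃ b, coord b (γ t) = coord b (γ s) := by
  obtain ⟨a, d, hd, hγ⟩ := h
  rw [hγ s (left_mem_Icc.2 hst), hγ t (right_mem_Icc.2 hst)]
  exact hd.elim (fun hd => ⟨true, by simp [coord, hd]⟩) (fun hd => ⟨false, by simp [coord, hd]⟩)

theorem image_add_mul_Icc (a d : ℝ) {s t : ℝ} (hst : s ≤ t) :
    (fun x => a + x * d) '' Icc s t = uIcc (a + s * d) (a + t * d) := by
  rw [← uIcc_of_le hst, ← image_const_add_uIcc, ← image_mul_const_uIcc, image_image]

theorem AxisAffOn.image_Icc {γ : ℝ → Pt} {s t : ℝ} (hst : s ≤ t) (h : AxisAffOn γ s t) :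
    γ '' Icc s t = uIcc (γ s) (γ t) := by
  obtain ⟨a, d, hd, hγ⟩ := h
  rw [image_congr hγ, hγ s (left_mem_Icc.2 hst), hγ t (right_mem_Icc.2 hst), ← uIcc_prod_uIcc,
    ← image_add_mul_Icc a.1 d.1 hst, ← image_add_mul_Icc a.2 d.2 hst]
  have hne : (Icc s t).Nonempty := nonempty_Icc.2 hst
  rcases hd with hd | hd
  · simp [hd, hne.image_const, singleton_prod, image_image]
  · simp [hd, hne.image_const, prod_singleton, image_image]

theorem IsRectCurveN.exists_rectPath {n : ℕ} {γ : ℝ → Pt} (h : IsRectCurveN n γ) :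
    ∃ P : RectPath n, P.trace = Im γ := by
  obtain ⟨-, t, ht0, ht1, hmono, haff⟩ := h
  have hle : ∀ i : Fin n, t i.castSucc ≤ t i.succ := fun i => hmono (Fin.castSucc_lt_succ).le
  choose σ hσ using fun i => (haff i).exists_coord_eq (hle i)
  refine ⟨⟨γ ∘ t, σ, hσ⟩, ?_⟩
  rw [Im, ← ht0, ← ht1, ← iUnion_Icc_castSucc_succ hmono (by rw [ht0, ht1]; exact one_pos),
    image_iUnion]
  exact iUnion_congr fun i => ((haff i).image_Icc (hle i)).symm

/-! ### Counting neighbourhoods -/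

theorem uIcc_inter_uIcc_nonempty_iff {α : Type*} [Lattice α] {a b c d : α} :
    (uIcc a b ∩ uIcc c d).Nonempty ↔ c ⊓ d ≤ a ⊔ b ∧ a ⊓ b ≤ c ⊔ d := by
  simp only [uIcc, Icc_inter_Icc, nonempty_Icc, sup_le_iff, le_inf_iff, inf_le_sup, true_and,
    and_true]

theorem RectPath.trace_inter_trace_nonempty_iff {m n : ℕ} {P : RectPath m} {Q : RectPath n} :
    (P.trace ∩ Q.trace).Nonempty ↔ ∃ (i : Fin m) (j : Fin n), ∀ b,
      (uIcc (coord b (P.vertex i.castSucc)) (coord b (P.vertex i.succ)) ∩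
        uIcc (coord b (Q.vertex j.castSucc)) (coord b (Q.vertex j.succ))).Nonempty := by
  simp only [trace, iUnion_inter, inter_iUnion, nonempty_iUnion, Bool.forall_bool, coord,
    cond_true, cond_false, uIcc_inter_uIcc_nonempty_iff, Prod.le_def, Prod.fst_inf, Prod.snd_inf,
    Prod.fst_sup, Prod.snd_sup]
  grind

/-- A labelling of a linear order that distinguishes the elements of `S` from each other and from
the cells (maximal intervals avoiding `S`) between them, all in their given order. -/
def IsCellLabelling {α β : Type*} [LE α] [LE β] (S : Finset α) (f : α → β) : Prop :=
  ∀ s ∈ S, ∀ r, (s ≤ r ↔ f s ≤ f r) ∧ (r ≤ s ↔ f r ≤ f s)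

theorem exists_isCellLabelling {α : Type*} [LinearOrder α] (S : Finset α) :
    ∃ f : α → Fin (2 * S.card + 1), IsCellLabelling S f := by
  let lt (r : α) := S.filter (· < r)
  let le (r : α) := S.filter (· ≤ r)
  have hbound (r : α) : (lt r).card + (le r).card < 2 * S.card + 1 := by
    have hlt : (lt r).card ≤ S.card := S.card_filter_le _
    have hle : (le r).card ≤ S.card := S.card_filter_le _
    omega
  have hlt_mono {r r' : α} (h : r ≤ r') : lt r ⊆ lt r' :=
    Finset.monotone_filter_right S fun _ _ hs => lt_of_lt_of_le hs h
  have hle_mono {r r' : α} (h : r ≤ r') : le r ⊆ le r' :=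
    Finset.monotone_filter_right S fun _ _ hs => le_trans hs h
  let f (r : α) : Fin (2 * S.card + 1) := ⟨(lt r).card + (le r).card, hbound r⟩
  have hf_mono : Monotone f := fun r r' h =>
    add_le_add (Finset.card_le_card (hlt_mono h)) (Finset.card_le_card (hle_mono h))
  have hf_above {s r : α} (hs : s ∈ S) (h : s < r) : f s < f r :=
    add_lt_add_of_lt_of_le
      (Finset.card_lt_card (Finset.ssubset_iff_of_subset (hlt_mono h.le) |>.2
        ⟨s, by simp [lt, hs, h], by simp [lt]⟩))
      (Finset.card_le_card (hle_mono h.le))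
  have hf_below {s r : α} (hs : s ∈ S) (h : r < s) : f r < f s :=
    add_lt_add_of_le_of_lt (Finset.card_le_card (hlt_mono h.le))
      (Finset.card_lt_card (Finset.ssubset_iff_of_subset (hle_mono h.le) |>.2
        ⟨s, by simp [le, hs], by simp [le, h]⟩))
  refine ⟨f, fun s hs r => ⟨⟨@hf_mono s r, ?_⟩, ⟨@hf_mono r s, ?_⟩⟩⟩
  · exact fun h => not_lt.1 fun hr => (hf_below hs hr).not_ge h
  · exact fun h => not_lt.1 fun hr => (hf_above hs hr).not_ge h

theorem IsCellLabelling.uIcc_inter_uIcc_nonempty_iff {α β : Type*} [LinearOrder α]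
    [LinearOrder β] {S : Finset α} {f : α → β} (hf : IsCellLabelling S f) {a b c d : α}
    (hc : c ∈ S) (hd : d ∈ S) :
    (uIcc a b ∩ uIcc c d).Nonempty ↔ (uIcc (f a) (f b) ∩ uIcc (f c) (f d)).Nonempty := by
  simp only [_root_.uIcc_inter_uIcc_nonempty_iff, inf_le_iff, le_sup_iff, (hf c hc a).1,
    (hf c hc a).2, (hf c hc b).1, (hf c hc b).2, (hf d hd a).1, (hf d hd a).2, (hf d hd b).1,
    (hf d hd b).2]

theorem RectPath.inter_trace_nonempty_iff_of_code_eq {m n : ℕ} {α : Type*} [LinearOrder α]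
    {S : Finset ℝ} {f : ℝ → α} (hf : IsCellLabelling S f) {P P' : RectPath n} {Q : RectPath m}
    (hQ : ∀ b j, coord b (Q.vertex j) ∈ S) (hcode : P.code f = P'.code f) :
    (P.trace ∩ Q.trace).Nonempty ↔ (P'.trace ∩ Q.trace).Nonempty := by
  simp only [trace_inter_trace_nonempty_iff, hf.uIcc_inter_uIcc_nonempty_iff (hQ _ _) (hQ _ _),
    label_eq_of_code_eq hcode]

theorem card_le_of_injective_neighbourhood {B C : Type*} [Fintype B] [Fintype C] {m n : ℕ}
    {β : B → ℝ → Pt} {γ : C → ℝ → Pt} (hβ : ∀ b, IsRectCurveN m (β b))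
    (hγ : ∀ c, IsRectCurveN n (γ c))
    (hsep : Function.Injective fun c => {b | (Im (γ c) ∩ Im (β b)).Nonempty}) :
    Fintype.card C ≤ 2 ^ n * (4 * (m + 1) * Fintype.card B + 1) ^ (n + 2) := by
  choose Q hQ using fun b => (hβ b).exists_rectPath
  choose P hP using fun c => (hγ c).exists_rectPath
  let S : Finset ℝ := Finset.univ.image fun x : Bool × B × Fin (m + 1) =>
    coord x.1 ((Q x.2.1).vertex x.2.2)
  have hmem (c : Bool) (b : B) (j : Fin (m + 1)) : coord c ((Q b).vertex j) ∈ S :=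
    Finset.mem_image_of_mem _ (Finset.mem_univ (c, b, j))
  have hcard : 2 * S.card + 1 ≤ 4 * (m + 1) * Fintype.card B + 1 := by
    have : S.card ≤ 2 * (Fintype.card B * (m + 1)) :=
      Finset.card_image_le.trans_eq (by simp)
    linarith
  obtain ⟨f, hf⟩ := exists_isCellLabelling S
  have hcode : Function.Injective fun c => (P c).code f := fun c c' h => hsep <| by
    ext b
    simpa only [mem_ofPred_eq, hP, hQ] using
      RectPath.inter_trace_nonempty_iff_of_code_eq hf (fun _ _ => hmem _ b _) h
  calc Fintype.card C
      ≤ 2 ^ n * ((2 * S.card + 1) ^ 2 * (2 * S.card + 1) ^ n) := by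
        simpa using Fintype.card_le_of_injective _ hcode
    _ = 2 ^ n * (2 * S.card + 1) ^ (n + 2) := by ring
    _ ≤ 2 ^ n * (4 * (m + 1) * Fintype.card B + 1) ^ (n + 2) := by gcongr

/-! ### Staircases and gates -/

/-- The product of `s` and `t`, with the factors swapped for odd `i`. -/
def altProd (i : ℕ) (s t : Set ℝ) : Set Pt := if Even i then s ×ˢ t else t ×ˢ s

/-- The horizontal (even `i`) or vertical (odd `i`) line whose constant coordinate is `z`,
parametrized by the sum of the two coordinates. -/
def axisLine (i : ℕ) (z l : ℝ) : Pt := if Even i then (l - z, z) else (z, l - z)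

/-- The staircase whose `i`-th segment moves from `a i` to `a (i + 2)` in one coordinate
while the other one is `a (i + 1)`. The moving coordinate is the abscissa for even `i`. -/
def staircase (a : ℕ → ℝ) (n : ℕ) : Set Pt :=
  ⋃ i : Fin n, altProd i (Icc (a i) (a (i + 2))) {a (i + 1)}

/-- A segment perpendicular to the `i`-th segments of staircases, at position `w` and spanning
`[l, r]` in the other coordinate. -/
def gate (i : ℕ) (w l r : ℝ) : Set Pt := altProd i {w} (Icc l r)

theorem altProd_succ (i : ℕ) (s t : Set ℝ) : altProd (i + 1) s t = altProd i t s := by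
  by_cases h : Even i <;> simp [altProd, h, Nat.even_add_one]

theorem altProd_inter_altProd_nonempty_of_even_iff {i j : ℕ} (hij : Even i ↔ Even j)
    {s t s' t' : Set ℝ} :
    (altProd i s t ∩ altProd j s' t').Nonempty ↔ (s ∩ s').Nonempty ∧ (t ∩ t').Nonempty := by
  by_cases hj : Even j <;> simp [altProd, hij, hj, prod_inter_prod, prod_nonempty_iff, and_comm]

theorem altProd_inter_altProd_nonempty_of_even_succ_iff {i j : ℕ} (hij : Even (i + 1) ↔ Even j)
    {s t s' t' : Set ℝ} :
    (altProd i s t ∩ altProd j s' t').Nonempty ↔ (s ∩ t').Nonempty ∧ (t ∩ s').Nonempty := by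
  rw [← altProd_succ, altProd_inter_altProd_nonempty_of_even_iff hij, and_comm]

theorem gate_inter_staircase_nonempty_iff {a : ℕ → ℝ} (ha : Monotone a) {i n : ℕ} (hi : i < n)
    {w l r : ℝ} (hl : l ∈ Ioc (a i) (a (i + 1))) (hr : r ∈ Ico (a (i + 1)) (a (i + 2))) :
    (gate i w l r ∩ staircase a n).Nonempty ↔ w ∈ Icc (a i) (a (i + 2)) := by
  simp only [gate, staircase, inter_iUnion, nonempty_iUnion]
  constructor
  · rintro ⟨j, hj⟩
    by_cases hij : Even i ↔ Even (j : ℕ)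
    · rw [altProd_inter_altProd_nonempty_of_even_iff hij, singleton_inter_nonempty,
        inter_singleton_nonempty] at hj
      have hlo : i < j + 1 := ha.reflect_lt (hl.1.trans_le hj.2.1)
      have hhi : j + 1 < i + 2 := ha.reflect_lt (hj.2.2.trans_lt hr.2)
      obtain rfl : i = j := by omega
      exact hj.1
    · rw [altProd_inter_altProd_nonempty_of_even_succ_iff (by grind), singleton_inter_nonempty,
        mem_singleton_iff, Icc_inter_Icc, nonempty_Icc, sup_le_iff, le_inf_iff, le_inf_iff] at hj
      obtain ⟨rfl, ⟨-, hlj⟩, hjr, -⟩ := hj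
      have hlo : i < j + 2 := ha.reflect_lt (hl.1.trans_le hlj)
      have hhi : j < i + 2 := ha.reflect_lt (hjr.trans_lt hr.2)
      rcases lt_or_gt_of_ne (fun h => hij (h ▸ Iff.rfl) : i ≠ j) with h | h <;>
        exact ⟨ha (by omega), ha (by omega)⟩
  · intro hw
    refine ⟨⟨i, hi⟩, (altProd_inter_altProd_nonempty_of_even_iff Iff.rfl).2 ⟨?_, ?_⟩⟩
    · exact singleton_inter_nonempty.2 hw
    · exact inter_singleton_nonempty.2 ⟨hl.2, hr.1⟩

theorem fst_axisLine_add_snd (i : ℕ) (z l : ℝ) : (axisLine i z l).1 + (axisLine i z l).2 = l := by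
  by_cases h : Even i <;> simp [axisLine, h]

theorem axisLine_add (i : ℕ) (z w : ℝ) : axisLine i z (z + w) = axisLine (i + 1) w (z + w) := by
  by_cases h : Even i <;> simp [axisLine, h, Nat.even_add_one]

theorem axisAffOn_axisLine (i : ℕ) (z s t : ℝ) : AxisAffOn (axisLine i z) s t := by
  by_cases h : Even i
  · exact ⟨(-z, z), (1, 0), Or.inr rfl, fun x _ => by simp [axisLine, h]; ring⟩
  · exact ⟨(z, -z), (0, 1), Or.inl rfl, fun x _ => by simp [axisLine, h]; ring⟩

theorem axisLine_image_Icc (i : ℕ) (x y z : ℝ) :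
    axisLine i z '' Icc (x + z) (y + z) = altProd i (Icc x y) {z} := by
  have hshift : (· - z) '' Icc (x + z) (y + z) = Icc x y := by simp
  rw [← hshift]
  by_cases h : Even i
  · simp only [altProd, if_pos h, prod_singleton, image_image]
    exact image_congr fun l _ => if_pos h
  · simp only [altProd, if_neg h, singleton_prod, image_image]
    exact image_congr fun l _ => if_neg h

theorem AxisAffOn.congr {γ δ : ℝ → Pt} {s t : ℝ} (h : AxisAffOn γ s t)
    (hδ : EqOn δ γ (Icc s t)) : AxisAffOn δ s t := by
  obtain ⟨a, d, hd, hγ⟩ := h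
  exact ⟨a, d, hd, fun x hx => (hδ hx).trans (hγ x hx)⟩

theorem exists_eqOn_of_agree {ι α β : Type*} [Nonempty ι] {I : ι → Set α} {f : ι → α → β}
    (h : ∀ i j x, x ∈ I i → x ∈ I j → f i x = f j x) : ∃ g, ∀ i, EqOn g (f i) (I i) :=
  ⟨fun x => f (Classical.epsilon fun i => x ∈ I i) x, fun i x hx =>
    h _ i x (Classical.epsilon_spec (p := fun i => x ∈ I i) ⟨i, hx⟩) hx⟩

theorem exists_staircase_arclength {a : ℕ → ℝ} (ha : StrictMono a) :
    ∃ γ, ∀ i, EqOn γ (axisLine i (a (i + 1))) (Icc (a i + a (i + 1)) (a (i + 1) + a (i + 2))) := by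
  refine exists_eqOn_of_agree fun i j l hi hj => ?_
  wlog hij : i < j generalizing i j
  · rcases (not_lt.1 hij).eq_or_lt with rfl | hji
    · rfl
    · exact (this j i hj hi hji).symm
  -- Arc-length intervals of non-consecutive segments are disjoint.
  have hsum : StrictMono fun i => a i + a (i + 1) := ha.add fun _ _ h => ha (by omega)
  obtain rfl : j = i + 1 := by
    have := hsum.le_iff_le.1 (hj.1.trans hi.2)
    omega
  obtain rfl : l = a (i + 1) + a (i + 2) := hi.2.antisymm hj.1
  exact axisLine_add i _ _

theorem exists_isRectCurveN_staircase {a : ℕ → ℝ} (ha : StrictMono a) {n : ℕ} (hn : 0 < n) :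
    ∃ γ, IsRectCurveN n γ ∧ Im γ = staircase a n := by
  obtain ⟨γ, hγ⟩ := exists_staircase_arclength ha
  let s (i : Fin (n + 1)) : ℝ := a i + a (i + 1)
  have hs : StrictMono s := fun i j hij => add_lt_add (ha hij) (ha (Nat.succ_lt_succ hij))
  have hlt : s 0 < s (Fin.last n) := hs (Fin.lt_def.2 hn)
  have hγs (i : Fin n) : EqOn γ (axisLine i (a (i + 1))) (Icc (s i.castSucc) (s i.succ)) := hγ i
  have hsum : ∀ l ∈ Icc (s 0) (s (Fin.last n)), (γ l).1 + (γ l).2 = l := by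
    rw [← iUnion_Icc_castSucc_succ hs.monotone hlt]
    intro l hl
    obtain ⟨i, hi⟩ := mem_iUnion.1 hl
    rw [hγs i hi, fst_axisLine_add_snd]
  have hinj : InjOn γ (Icc (s 0) (s (Fin.last n))) := fun x hx y hy hxy => by
    rw [← hsum x hx, ← hsum y hy, hxy]
  obtain ⟨δ, hδ, himage⟩ := exists_isRectCurveN_of_chain hs.monotone hlt hinj fun i =>
    (axisAffOn_axisLine i _ _ _).congr (hγs i)
  refine ⟨δ, hδ, himage.trans (iUnion_congr fun i => ?_)⟩
  rw [(hγs i).image_eq, ← axisLine_image_Icc, add_comm (a (i + 2))]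
  rfl

theorem exists_isRectCurveN_gate (i : ℕ) (w : ℝ) {l r : ℝ} (hlr : l < r) :
    ∃ γ, IsRectCurveN 1 γ ∧ Im γ = gate i w l r := by
  have hinj : Function.LeftInverse (fun p : Pt => p.1 + p.2) (axisLine (i + 1) w) :=
    fst_axisLine_add_snd (i + 1) w
  obtain ⟨γ, hγ, himage⟩ := exists_isRectCurveN_of_chain (n := 1) (s := ![l + w, r + w])
    (by simpa using hlr.le) (by simpa using hlr) hinj.injective.injOn
    fun _ => axisAffOn_axisLine _ _ _ _
  refine ⟨γ, hγ, himage.trans ?_⟩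
  rw [iUnion, iSup_unique, gate, ← altProd_succ, ← axisLine_image_Icc]
  rfl

/-! ### Staircases with prescribed coordinates in disjoint blocks -/

/-- The sequence whose `i`-th term is `c i` counted from the start of the `i`-th block
`[i * L, (i + 1) * L)`. Here `(i : Fin N)` is `i` reduced modulo `N`, which merely extends `c` to
all of `ℕ`. -/
def blockSeq {N L : ℕ} [NeZero N] (c : Fin N → Fin L) (i : ℕ) : ℕ := i * L + c (Fin.ofNat N i)

section blockSeq

variable {N L : ℕ} [NeZero N] (c : Fin N → Fin L)

theorem mul_le_blockSeq (i : ℕ) : i * L ≤ blockSeq c i := Nat.le_add_right _ _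

theorem blockSeq_lt (i : ℕ) : blockSeq c i < (i + 1) * L := by
  rw [add_one_mul]
  exact Nat.add_lt_add_left (c _).isLt _

theorem blockSeq_val (j : Fin N) : blockSeq c j = j * L + c j := by
  rw [blockSeq, Fin.ofNat_val_eq_self]

theorem strictMono_blockSeq : StrictMono (blockSeq c) :=
  strictMono_nat_of_lt_succ fun i => (blockSeq_lt c i).trans_le (mul_le_blockSeq c (i + 1))

end blockSeq

theorem injective_setOf_mem_Icc_blockSeq {n L : ℕ} (hn : 2 ≤ n) :
    Function.Injective fun c : Fin (n + 2) → Fin L =>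
      {q : Fin n × Fin ((n + 2) * L) |
        (q.2 : ℕ) ∈ Icc (blockSeq c q.1) (blockSeq c (q.1 + 2))} := by
  intro c c' h
  have hmem (i : Fin n) {w : ℕ} (hw : w < (n + 2) * L) :
      w ∈ Icc (blockSeq c i) (blockSeq c (i + 2)) ↔
        w ∈ Icc (blockSeq c' i) (blockSeq c' (i + 2)) := Set.ext_iff.1 h (i, ⟨w, hw⟩)
  have hbound (c : Fin (n + 2) → Fin L) {i : ℕ} (hi : i < n + 2) : blockSeq c i < (n + 2) * L :=
    (blockSeq_lt c i).trans_le (Nat.mul_le_mul_right L hi)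
  have hends (i : Fin n) :
      blockSeq c i = blockSeq c' i ∧ blockSeq c (i + 2) = blockSeq c' (i + 2) := by
    have hle (c : Fin (n + 2) → Fin L) : blockSeq c i ≤ blockSeq c (i + 2) :=
      (strictMono_blockSeq c).monotone (Nat.le_add_right _ _)
    have hlo := (hmem i (hbound c (by omega))).1 ⟨le_rfl, hle c⟩
    have hhi := (hmem i (hbound c (by omega))).1 ⟨hle c, le_rfl⟩
    have hlo' := (hmem i (hbound c' (by omega))).2 ⟨le_rfl, hle c'⟩
    have hhi' := (hmem i (hbound c' (by omega))).2 ⟨hle c', le_rfl⟩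
    exact ⟨hlo'.1.antisymm hlo.1, hhi.2.antisymm hhi'.2⟩
  ext j
  have hj : blockSeq c j = blockSeq c' j := by
    rcases lt_or_ge (j : ℕ) n with hjn | hjn
    · exact (hends ⟨j, hjn⟩).1
    · simpa [show (j : ℕ) - 2 + 2 = j by omega] using (hends ⟨j - 2, by omega⟩).2
  simpa [blockSeq_val] using hj

/-! ### The separating graphs -/

/-- The intersection graph of a family of sets. -/
def intersectionGraph {V : Type*} (X : V → Set Pt) : SimpleGraph V where
  Adj u v := u ≠ v ∧ (X u ∩ X v).Nonempty
  symm := ⟨fun u v h => ⟨h.1.symm, inter_comm (X u) (X v) ▸ h.2⟩⟩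
  loopless := ⟨fun _ h => h.1 rfl⟩

theorem represents_intersectionGraph_iff {V : Type*} {X : V → Set Pt} {R : V → ℝ → Pt} :
    Represents (intersectionGraph X) R ↔
      ∀ u v, u ≠ v → ((Im (R u) ∩ Im (R v)).Nonempty ↔ (X u ∩ X v).Nonempty) :=
  forall₃_congr fun _ _ huv => iff_congr Iff.rfl (and_iff_right huv)

theorem inBkVPG_intersectionGraph {k : ℕ} {V : Type*} {X : V → Set Pt}
    (h : ∀ v, ∃ γ, IsKBendCurve k γ ∧ Im γ = X v) : InBkVPG k (intersectionGraph X) := by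
  choose R hR hX using h
  exact ⟨R, hR, represents_intersectionGraph_iff.2 fun u v _ => by rw [hX, hX]⟩

theorem InBkVPG.succ {k : ℕ} {V : Type*} {G : SimpleGraph V} : InBkVPG k G → InBkVPG (k + 1) G :=
  fun ⟨R, hR, hG⟩ => ⟨R, fun v => (hR v).succ, hG⟩

theorem InBkVPG.comap {k : ℕ} {V W : Type*} {G : SimpleGraph W} (f : V ↪ W) :
    InBkVPG k G → InBkVPG k (G.comap f) :=
  fun ⟨R, hR, hG⟩ => ⟨R ∘ f, fun v => hR (f v), fun _ _ huv => hG _ _ (f.injective.ne huv)⟩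

/-- The gate for the `i`-th segments of the staircases along `blockSeq c`: it separates the
`i`-th and the `(i + 2)`-nd block by the full `(i + 1)`-st block. The shift by `1 / 2` makes the
membership of the coordinates in the block strict. -/
def blockGate (n L : ℕ) (q : Fin n × Fin ((n + 2) * L)) : Set Pt :=
  gate q.1 q.2 ((q.1 + 1) * L - 1 / 2) ((q.1 + 2) * L - 1 / 2)

/-- The staircase with `n` segments and free coordinates `c i` in consecutive blocks. -/
def blockStaircase (n L : ℕ) (c : Fin (n + 2) → Fin L) : Set Pt :=
  staircase (fun i => blockSeq c i) n

/-- The intersection graph of all gates and all staircases with `n` segments and coordinates in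
blocks of length `L`. -/
def staircaseGraph (n L : ℕ) :
    SimpleGraph ((Fin n × Fin ((n + 2) * L)) ⊕ (Fin (n + 2) → Fin L)) :=
  intersectionGraph (Sum.elim (blockGate n L) (blockStaircase n L))

theorem strictMono_cast_blockSeq {N L : ℕ} [NeZero N] (c : Fin N → Fin L) :
    StrictMono fun i => (blockSeq c i : ℝ) :=
  Nat.strictMono_cast.comp (strictMono_blockSeq c)

theorem blockGate_inter_blockStaircase_nonempty_iff {n L : ℕ} (q : Fin n × Fin ((n + 2) * L))
    (c : Fin (n + 2) → Fin L) :
    (blockGate n L q ∩ blockStaircase n L c).Nonempty ↔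
      (q.2 : ℕ) ∈ Icc (blockSeq c q.1) (blockSeq c (q.1 + 2)) := by
  have hlower (i : ℕ) : (i * L : ℝ) ≤ blockSeq c i := mod_cast mul_le_blockSeq c i
  have hupper (i : ℕ) : (blockSeq c i + 1 : ℝ) ≤ (i + 1) * L := mod_cast blockSeq_lt c i
  have h₀ := hupper q.1
  have h₁ := hlower (q.1 + 1)
  have h₁' := hupper (q.1 + 1)
  have h₂ := hlower (q.1 + 2)
  push_cast at h₁ h₁' h₂
  rw [blockGate, blockStaircase, gate_inter_staircase_nonempty_iff
    (strictMono_cast_blockSeq c).monotone q.1.isLt ⟨by linarith, by linarith⟩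
    ⟨by linarith, by linarith⟩]
  simp only [mem_Icc, Nat.cast_le]

theorem inBkVPG_staircaseGraph (k L : ℕ) : InBkVPG k (staircaseGraph (k + 1) L) := by
  refine inBkVPG_intersectionGraph ?_
  rintro (⟨i, w⟩ | c)
  · have hL : 0 < L := Nat.pos_of_mul_pos_left w.pos
    obtain ⟨γ, hγ, himage⟩ := exists_isRectCurveN_gate i w
      (show (i + 1) * L - 1 / 2 < ((i + 2) * L - 1 / 2 : ℝ) by gcongr; norm_num)
    exact ⟨γ, hγ.mono (by omega), himage⟩
  · exact exists_isRectCurveN_staircase (strictMono_cast_blockSeq c) k.succ_pos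

theorem pow_le_of_inBkVPG_staircaseGraph {k n L : ℕ} (hn : 2 ≤ n)
    (h : InBkVPG k (staircaseGraph n L)) :
    L ^ (n + 2) ≤ 2 ^ (k + 1) * (4 * (k + 2) * (n * ((n + 2) * L)) + 1) ^ (k + 3) := by
  obtain ⟨R, hR, hrep⟩ := h
  have hmeet (q : Fin n × Fin ((n + 2) * L)) (c : Fin (n + 2) → Fin L) :
      (Im (R (Sum.inr c)) ∩ Im (R (Sum.inl q))).Nonempty ↔
        (q.2 : ℕ) ∈ Icc (blockSeq c q.1) (blockSeq c (q.1 + 2)) := by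
    rw [inter_comm, represents_intersectionGraph_iff.1 hrep _ _ Sum.inl_ne_inr, Sum.elim_inl,
      Sum.elim_inr, blockGate_inter_blockStaircase_nonempty_iff]
  have hsep : Function.Injective fun c : Fin (n + 2) → Fin L =>
      {q | (Im (R (Sum.inr c)) ∩ Im (R (Sum.inl q))).Nonempty} := by
    simpa only [hmeet] using injective_setOf_mem_Icc_blockSeq hn
  simpa using card_le_of_injective_neighbourhood (fun q => hR (Sum.inl q))
    (fun c => hR (Sum.inr c)) hsep

theorem exists_mul_pow_lt_pow_succ (a b d : ℕ) : ∃ L, a * (b * L + 1) ^ d < L ^ (d + 1) := by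
  let K := a * (b + 1) ^ d
  refine ⟨K + 1, ?_⟩
  calc a * (b * (K + 1) + 1) ^ d
      ≤ a * ((b + 1) * (K + 1)) ^ d := by gcongr; linarith
    _ = K * (K + 1) ^ d := by rw [mul_pow, ← mul_assoc]
    _ < (K + 1) * (K + 1) ^ d := by gcongr; omega
    _ = (K + 1) ^ (d + 1) := (pow_succ' _ _).symm

theorem exists_not_inBkVPG_staircaseGraph (k : ℕ) :
    ∃ L, ¬ InBkVPG k (staircaseGraph (k + 2) L) := by
  obtain ⟨L, hL⟩ := exists_mul_pow_lt_pow_succ (2 ^ (k + 1))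
    (4 * (k + 2) * ((k + 2) * (k + 4))) (k + 3)
  refine ⟨L, fun h => hL.not_ge ?_⟩
  simpa only [mul_assoc] using pow_le_of_inBkVPG_staircaseGraph (by omega) h

/-- For every `k ≥ 0`, the class `B_k`-VPG is a proper subclass of
`B_{k+1}`-VPG: every graph with a `B_k`-VPG representation has a `B_{k+1}`-VPG
representation, and some graph has a `B_{k+1}`-VPG representation but no `B_k`-VPG
representation. -/
theorem Bk_VPG_strict_subclass_of_Bk1_VPG (k : ℕ) :
    (∀ (V : Type) (G : SimpleGraph V), InBkVPG k G → InBkVPG (k + 1) G) ∧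
    ∃ (n : ℕ) (G : SimpleGraph (Fin n)), InBkVPG (k + 1) G ∧ ¬ InBkVPG k G := by
  refine ⟨fun V G => InBkVPG.succ, ?_⟩
  obtain ⟨L, hL⟩ := exists_not_inBkVPG_staircaseGraph k
  let e := Fintype.equivFin ((Fin (k + 2) × Fin ((k + 2 + 2) * L)) ⊕ (Fin (k + 2 + 2) → Fin L))
  refine ⟨_, (staircaseGraph (k + 2) L).comap e.symm.toEmbedding,
    (inBkVPG_staircaseGraph (k + 1) L).comap _, fun h => hL ?_⟩
  simpa [SimpleGraph.comap_comap] using h.comap e.toEmbedding
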